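/- Let φ : ℕ → ℝ₊ be increasing with φ(n) → ∞ and let ψ(n) = log φ(n). Suppose that for every real M > 1 there exists a strictly increasing sequence (n_k) of positive integers such that liminf_{k→∞} (ψ(n_k) − ψ(n_{k−1}+1)) > 0, and such that n_k − n_{k−1} ≥ 2 and ψ(n_k)/(n_k − n_{k−1}) ≥ M hold for all sufficiently large k. Then the Hausdorff dimension of E(φ) is at most 1/2. -/

import Mathlib

/-!
Fix `R` and apply the hypothesis with `M` large in terms of `R`. For `x ∈ E(φ)`, the gap
`φ(n_{k-1}+1) ≤ e^{-δ} φ(n_k)` and `S_n ~ φ(n)` give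
`∑_{n_{k-1}+2 ≤ i ≤ n_k} a_i a_{i+1} ≥ c φ(n_k)`. As all quotients are at least `1`, every term of
this sum is at most the product of the quotients of the block `n_{k-1}+2, …, n_k+1`, so this
product is at least `c 2^{-ℓ} φ(n_k)`, where `ℓ = n_k - n_{k-1}` is the length of the block. Since
`φ(n_k) ≥ e^{Mℓ}` and `φ(n_k) → ∞`, it exceeds `R^{2ℓ}` for all large `k`. The blocks tile the
indices, so `a_1 ⋯ a_m ≥ R^m` for infinitely many `m` (`Ephi_subset_bigMean`).

It remains to see that the set where this holds for every `R` has dimension at most `1/2`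
(`dimH_bigMean_le`). A cylinder of order `m` has diameter at most `(a_1 ⋯ a_m)^{-2}`. If
`2s = 1 + 2η` with `η > 0`, the cylinders of order `m` with `a_1 ⋯ a_m ≥ R^m` satisfy
`∑ diam^s ≤ (R^{-η} ∑_a a^{-(1+η)})^m`, which is at most `2^{-m}` once `R` is large. Summing over
`m ≥ n` bounds the `s`-dimensional Hausdorff measure.
-/

open MeasureTheory Filter Real Set

/-- The Gauss map `T(x) = 1/x - ⌊1/x⌋`, with `T(0) = 0`. -/
noncomputable def gaussMap (x : ℝ) : ℝ := if x = 0 then 0 else 1 / x - ⌊1 / x⌋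

/-- The `n`-th partial quotient `a_n(x) = ⌊1 / T^{n-1}(x)⌋` (for `n ≥ 1`). -/
noncomputable def pq (n : ℕ) (x : ℝ) : ℕ := ⌊1 / (gaussMap^[n - 1] x)⌋₊

/-- `S_n(x) = ∑_{i=1}^n a_i(x) a_{i+1}(x)`. -/
noncomputable def S (n : ℕ) (x : ℝ) : ℕ := ∑ i ∈ Finset.Icc 1 n, pq i x * pq (i + 1) x

/-- The level set `E(φ)` of points whose sums `S_n` grow like `φ(n)`. -/
def Ephi (φ : ℕ → ℝ) : Set ℝ :=
  {x : ℝ | x ∈ Set.Ioo (0:ℝ) 1 ∧ Irrational x ∧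
    Tendsto (fun n : ℕ => (S n x : ℝ) / φ n) atTop (nhds 1)}

/-! ### Cylinders of the Gauss map -/

/-- The irrational points of `(0,1)`, on which every iterate of the Gauss map is nonzero. -/
def irrUnit : Set ℝ := {x | x ∈ Set.Ioo (0:ℝ) 1 ∧ Irrational x}

lemma gaussMap_eq {x : ℝ} (hx : x ∈ irrUnit) : gaussMap x = 1 / x - (⌊1 / x⌋₊ : ℝ) := by
  have h0 : 0 < x := hx.1.1
  rw [gaussMap, if_neg h0.ne', natCast_floor_eq_intCast_floor (by positivity)]

lemma gaussMap_mem {x : ℝ} (hx : x ∈ irrUnit) : gaussMap x ∈ irrUnit := by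
  have h0 : 0 < x := hx.1.1
  have hir : Irrational (1 / x - (⌊1 / x⌋ : ℤ)) := by
    rw [one_div]; exact (irrational_inv_iff.2 hx.2).sub_intCast _
  have hg : gaussMap x = Int.fract (1 / x) := by
    rw [gaussMap, if_neg h0.ne']; rfl
  have hir' : Irrational (gaussMap x) := by rw [hg]; exact hir
  refine ⟨⟨?_, ?_⟩, hir'⟩
  · exact lt_of_le_of_ne (hg ▸ Int.fract_nonneg _) hir'.ne_zero.symm
  · rw [hg]; exact Int.fract_lt_one _

lemma iterate_mem {x : ℝ} (hx : x ∈ irrUnit) (n : ℕ) : gaussMap^[n] x ∈ irrUnit := by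
  induction n with
  | zero => exact hx
  | succ n ih => rw [Function.iterate_succ_apply']; exact gaussMap_mem ih

lemma one_le_pq {x : ℝ} (hx : x ∈ irrUnit) (n : ℕ) : 1 ≤ pq n x := by
  have h := (iterate_mem hx (n - 1)).1
  rw [pq, Nat.one_le_floor_iff, le_div_iff₀ h.1]
  linarith [h.2]

/-- The Gauss map expands by at least `a ^ 2` on the set of points with first quotient `a`. -/
lemma dist_step {x y : ℝ} (hx : x ∈ irrUnit) (hy : y ∈ irrUnit) {a : ℕ} (ha : 1 ≤ a)
    (hxa : ⌊1 / x⌋₊ = a) (hya : ⌊1 / y⌋₊ = a) :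
    |x - y| ≤ |gaussMap x - gaussMap y| * ((a : ℝ) ^ 2)⁻¹ := by
  have hx0 : 0 < x := hx.1.1
  have hy0 : 0 < y := hy.1.1
  have ha0 : (0:ℝ) < a := by exact_mod_cast ha
  have h : x - y = (gaussMap y - gaussMap x) * (x * y) := by
    rw [gaussMap_eq hx, gaussMap_eq hy, hxa, hya]; field_simp; ring
  have hxb : x ≤ (a:ℝ)⁻¹ := by
    rw [le_inv_comm₀ hx0 ha0, ← one_div, ← hxa]; exact Nat.floor_le (by positivity)
  have hyb : y ≤ (a:ℝ)⁻¹ := by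
    rw [le_inv_comm₀ hy0 ha0, ← one_div, ← hya]; exact Nat.floor_le (by positivity)
  rw [h, abs_mul, abs_sub_comm, abs_of_pos (mul_pos hx0 hy0), sq, mul_inv]
  gcongr

lemma dist_le_iterate {x y : ℝ} (hx : x ∈ irrUnit) (hy : y ∈ irrUnit) (m : ℕ)
    (h : ∀ i < m, pq (i + 1) x = pq (i + 1) y) :
    |x - y| ≤ |gaussMap^[m] x - gaussMap^[m] y| *
      ((∏ i ∈ Finset.range m, (pq (i + 1) x : ℝ)) ^ 2)⁻¹ := by
  induction m with
  | zero => simp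
  | succ m ih =>
    have h1 := ih fun i hi => h i (by omega)
    have h2 := dist_step (iterate_mem hx m) (iterate_mem hy m) (one_le_pq hx (m + 1))
      rfl (h m (by omega)).symm
    rw [← Function.iterate_succ_apply' gaussMap, ← Function.iterate_succ_apply' gaussMap] at h2
    refine h1.trans ?_
    rw [Finset.prod_range_succ, mul_pow, mul_inv, mul_comm (_⁻¹) (_⁻¹), ← mul_assoc]
    gcongr

/-- A cylinder of order `m` has diameter at most the inverse square of the product of its
partial quotients. -/
lemma dist_le_prod {x y : ℝ} (hx : x ∈ irrUnit) (hy : y ∈ irrUnit) (m : ℕ)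
    (h : ∀ i < m, pq (i + 1) x = pq (i + 1) y) :
    dist x y ≤ ((∏ i ∈ Finset.range m, (pq (i + 1) x : ℝ)) ^ 2)⁻¹ := by
  rw [Real.dist_eq]
  refine (dist_le_iterate hx hy m h).trans (mul_le_of_le_one_left (by positivity) ?_)
  have h1 := (iterate_mem hx m).1
  have h2 := (iterate_mem hy m).1
  rw [abs_le]; constructor <;> linarith [h1.1, h1.2, h2.1, h2.2]

/-! ### Points with unbounded geometric means of partial quotients -/

lemma tsum_pi_prod (f : ℕ → ENNReal) (m : ℕ) :
    ∑' v : Fin m → ℕ, ∏ i, f (v i) = (∑' k, f k) ^ m := by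
  induction m with
  | zero => simp
  | succ m ih =>
    rw [← (Fin.consEquiv fun _ => ℕ).tsum_eq, pow_succ', ← ih]
    simp only [Fin.consEquiv, Equiv.coe_fn_mk, Fin.prod_univ_succ, Fin.cons_zero, Fin.cons_succ]
    rw [ENNReal.tsum_prod (f := fun (a : ℕ) (v : Fin m → ℕ) => f a * ∏ i, f (v i))]
    simp_rw [ENNReal.tsum_mul_left, ENNReal.tsum_mul_right]

/-- The part of the cylinder of order `m` with quotients `v i + 1` used in the covering: it is
empty unless `n ≤ m` and the geometric mean of the quotients is at least `R`. -/
def cyl (R : ℝ) (n : ℕ) (p : Σ m : ℕ, Fin m → ℕ) : Set ℝ :=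
  {x | n ≤ p.1 ∧ R ^ p.1 ≤ ∏ i, ((p.2 i : ℝ) + 1) ∧ x ∈ irrUnit ∧
    ∀ i : Fin p.1, pq (i + 1) x = p.2 i + 1}

lemma ediam_cyl_le (R : ℝ) (n : ℕ) (p : Σ m : ℕ, Fin m → ℕ) :
    Metric.ediam (cyl R n p) ≤ ENNReal.ofReal (((∏ i, ((p.2 i : ℝ) + 1)) ^ 2)⁻¹) := by
  refine Metric.ediam_le_of_forall_dist_le fun x hx y hy => ?_
  have h := dist_le_prod hx.2.2.1 hy.2.2.1 p.1 fun i hi =>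
    (hx.2.2.2 ⟨i, hi⟩).trans (hy.2.2.2 ⟨i, hi⟩).symm
  refine h.trans_eq ?_
  rw [← Fin.prod_univ_eq_prod_range (fun i => (pq (i + 1) x : ℝ)) p.1]
  congr 2
  refine Finset.prod_congr rfl fun i _ => ?_
  rw [hx.2.2.2 i]; push_cast; rfl

lemma ediam_cyl_le_half {R : ℝ} (hR : 2 ≤ R) (n : ℕ) (p : Σ m : ℕ, Fin m → ℕ) :
    Metric.ediam (cyl R n p) ≤ ENNReal.ofReal ((1 / 2) ^ n) := by
  rcases (cyl R n p).eq_empty_or_nonempty with h | ⟨x, hx⟩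
  · simp [h]
  refine (ediam_cyl_le R n p).trans (ENNReal.ofReal_le_ofReal ?_)
  have h1 : (2:ℝ) ^ n ≤ ∏ i, ((p.2 i : ℝ) + 1) :=
    calc (2:ℝ) ^ n ≤ 2 ^ p.1 := pow_le_pow_right₀ (by norm_num) hx.1
      _ ≤ R ^ p.1 := by gcongr
      _ ≤ _ := hx.2.1
  have h2 : (1:ℝ) ≤ 2 ^ n := one_le_pow₀ (by norm_num)
  rw [one_div, inv_pow]
  refine inv_anti₀ (by positivity) ?_
  nlinarith

/-- With `2 s = 1 + 2 η`, half of the excess over `1` is traded for a factor `R ^ (-η)` at each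
of the `m` quotients, and the other half keeps the sum over quotients convergent. -/
lemma ediam_cyl_rpow_le {R s η : ℝ} (hR : 2 ≤ R) (hs : 0 < s) (hη : 0 < η)
    (hsη : 2 * s = 1 + 2 * η) (n : ℕ) (p : Σ m : ℕ, Fin m → ℕ) :
    Metric.ediam (cyl R n p) ^ s ≤
      if n ≤ p.1 then ∏ i, ENNReal.ofReal (((p.2 i : ℝ) + 1) ^ (-(1 + η)) * R ^ (-η)) else 0 := by
  rcases (cyl R n p).eq_empty_or_nonempty with h | ⟨x, hx⟩
  · simp [h, hs]
  rw [if_pos hx.1]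
  refine (ENNReal.rpow_le_rpow (ediam_cyl_le R n p) hs.le).trans ?_
  have hP : ∀ i, (0:ℝ) ≤ ((p.2 i : ℝ) + 1) := fun i => by positivity
  have hR0 : 0 < R := by linarith
  set P : ℝ := ∏ i, ((p.2 i : ℝ) + 1) with hPdef
  have hP0 : 0 < P := Finset.prod_pos fun i _ => by positivity
  rw [ENNReal.ofReal_rpow_of_nonneg (by positivity) hs.le,
    ← ENNReal.ofReal_prod_of_nonneg fun i _ => by positivity]
  refine ENNReal.ofReal_le_ofReal ?_
  rw [Finset.prod_mul_distrib, Real.finsetProd_rpow _ _ fun i _ => hP i, ← hPdef]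
  simp only [Finset.prod_const, Finset.card_univ, Fintype.card_fin]
  have e1 : ((P ^ 2)⁻¹) ^ s = P ^ (-(1 + η)) * P ^ (-η) := by
    rw [← Real.rpow_add hP0, ← Real.rpow_natCast, ← Real.rpow_neg hP0.le, ← Real.rpow_mul hP0.le]
    congr 1; push_cast; linarith
  have e2 : (R ^ (-η)) ^ p.1 = (R ^ p.1) ^ (-η) := by
    rw [← Real.rpow_natCast, ← Real.rpow_natCast, ← Real.rpow_mul hR0.le,
      ← Real.rpow_mul hR0.le, mul_comm]
  rw [e1, e2]
  gcongr ?_ * ?_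
  exact Real.rpow_le_rpow_of_nonpos (by positivity) hx.2.1 (by linarith)

/-- Irrational points whose first `m` partial quotients have geometric mean at least `R` for
infinitely many `m`, whatever `R`. -/
def bigMean : Set ℝ :=
  {x | x ∈ irrUnit ∧ ∀ R : ℝ, ∃ᶠ m in atTop, R ^ m ≤ ∏ i ∈ Finset.range m, (pq (i + 1) x : ℝ)}

lemma bigMean_subset (R : ℝ) (n : ℕ) : bigMean ⊆ ⋃ p, cyl R n p := by
  rintro x ⟨hx, h⟩
  obtain ⟨m, hnm, hm⟩ := frequently_atTop.1 (h R) n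
  have e : ∀ i, pq i x - 1 + 1 = pq i x := fun i => Nat.sub_add_cancel (one_le_pq hx i)
  refine mem_iUnion.2 ⟨⟨m, fun i => pq (i + 1) x - 1⟩, hnm, ?_, hx, fun i => (e _).symm⟩
  refine hm.trans_eq ?_
  rw [← Fin.prod_univ_eq_prod_range (fun i => (pq (i + 1) x : ℝ)) m]
  refine Finset.prod_congr rfl fun i _ => ?_
  have := e (i + 1)
  exact_mod_cast this.symm

lemma exists_radius {η : ℝ} (hη : 0 < η) : ∃ R : ℝ, 2 ≤ R ∧
    ∑' k : ℕ, ENNReal.ofReal (((k : ℝ) + 1) ^ (-(1 + η)) * R ^ (-η)) ≤ 2⁻¹ := by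
  have hsum : Summable fun k : ℕ => ((k : ℝ) + 1) ^ (-(1 + η)) := by
    refine ((Real.summable_one_div_nat_add_rpow 1 (1 + η)).2 (by linarith)).congr fun k => ?_
    rw [abs_of_pos (by positivity), Real.rpow_neg (by positivity), one_div]
  set K := ∑' k : ℕ, ((k : ℝ) + 1) ^ (-(1 + η)) with hK
  have ht : Tendsto (fun R : ℝ => K * R ^ (-η)) atTop (nhds 0) := by
    simpa using (tendsto_rpow_neg_atTop hη).const_mul K
  obtain ⟨R, hR2, hR⟩ := ((eventually_ge_atTop (2:ℝ)).and
    (ht.eventually (eventually_le_nhds (show (0:ℝ) < 1 / 2 by norm_num)))).exists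
  refine ⟨R, hR2, ?_⟩
  have hR0 : 0 ≤ R := by linarith
  rw [← ENNReal.ofReal_tsum_of_nonneg (fun k => by positivity) (hsum.mul_right _), tsum_mul_right]
  refine (ENNReal.ofReal_le_ofReal hR).trans ?_
  rw [one_div, ENNReal.ofReal_inv_of_pos (by norm_num)]
  simp

lemma hausdorffMeasure_bigMean_ne_top {s : ℝ} (hs : 1 / 2 < s) : μH[s] bigMean ≠ ⊤ := by
  have hη : 0 < s - 1 / 2 := by linarith
  obtain ⟨R, hR, hsum⟩ := exists_radius hη
  have hr : Tendsto (fun n : ℕ => ENNReal.ofReal ((1 / 2 : ℝ) ^ n)) atTop (nhds 0) := by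
    have := ENNReal.tendsto_ofReal
      (tendsto_pow_atTop_nhds_zero_of_lt_one (r := (1 / 2 : ℝ)) (by norm_num) (by norm_num))
    simpa using this
  have h := Measure.hausdorffMeasure_le_liminf_tsum s bigMean
    (l := atTop) _ hr (fun n : ℕ => cyl R n)
    (Eventually.of_forall fun n p => ediam_cyl_le_half hR n p)
    (Eventually.of_forall fun n => bigMean_subset R n)
  have hb : ∀ n, ∑' p, Metric.ediam (cyl R n p) ^ s ≤ 2 := fun n => by
    calc ∑' p, Metric.ediam (cyl R n p) ^ s
        ≤ ∑' p : Σ m : ℕ, Fin m → ℕ, ∏ i, ENNReal.ofReal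
            (((p.2 i : ℝ) + 1) ^ (-(1 + (s - 1 / 2))) * R ^ (-(s - 1 / 2))) := by
          refine ENNReal.tsum_le_tsum fun p => ?_
          refine (ediam_cyl_rpow_le hR (by linarith) hη (by ring) n p).trans ?_
          split_ifs <;> simp
      _ = ∑' m : ℕ, (∑' k : ℕ, ENNReal.ofReal
            (((k : ℝ) + 1) ^ (-(1 + (s - 1 / 2))) * R ^ (-(s - 1 / 2)))) ^ m := by
          rw [ENNReal.tsum_sigma (fun (m : ℕ) (v : Fin m → ℕ) => ∏ i, ENNReal.ofReal
            (((v i : ℝ) + 1) ^ (-(1 + (s - 1 / 2))) * R ^ (-(s - 1 / 2))))]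
          refine tsum_congr fun m => ?_
          exact tsum_pi_prod (fun k : ℕ => ENNReal.ofReal
            (((k : ℝ) + 1) ^ (-(1 + (s - 1 / 2))) * R ^ (-(s - 1 / 2)))) m
      _ ≤ ∑' m : ℕ, (2⁻¹ : ENNReal) ^ m := ENNReal.tsum_le_tsum fun m => by gcongr
      _ = 2 := by rw [ENNReal.tsum_geometric, ENNReal.one_sub_inv_two, inv_inv]
  refine ne_top_of_le_ne_top (b := 2) (by simp) (h.trans ?_)
  exact (liminf_le_liminf (Eventually.of_forall hb)).trans_eq (liminf_const (2 : ENNReal))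

lemma dimH_bigMean_le : dimH bigMean ≤ 1 / 2 := by
  refine dimH_le fun d hd => ?_
  by_contra! hlt
  refine hausdorffMeasure_bigMean_ne_top (s := d) ?_ hd
  have h2 : ((1 / 2 : NNReal) : ENNReal) < d := by
    rwa [ENNReal.coe_div (by norm_num), ENNReal.coe_one, ENNReal.coe_ofNat]
  exact_mod_cast ENNReal.coe_lt_coe.1 h2

/-! ### Products over blocks for points of `E(φ)` -/

lemma S_eq_range (n : ℕ) (x : ℝ) :
    S n x = ∑ i ∈ Finset.range n, pq (i + 1) x * pq (i + 2) x := by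
  rw [S, Finset.range_eq_Ico, Finset.sum_Ico_add' (fun i => pq i x * pq (i + 1) x) 0 n 1]
  rfl

/-- Each term of the sum is a product of two of the factors on the right, all of which are at
least `1`, and there are fewer than `2 ^ (b - a)` terms. -/
lemma S_sub_le {x : ℝ} (hx : x ∈ irrUnit) {a b : ℕ} (h : a + 1 ≤ b) :
    (S b x : ℝ) - S (a + 1) x ≤
      2 ^ (b - a) * ∏ i ∈ Finset.Ico (a + 1) (b + 1), (pq (i + 1) x : ℝ) := by
  have h1 : S b x = S (a + 1) x + ∑ i ∈ Finset.Ico (a + 1) b, pq (i + 1) x * pq (i + 2) x := by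
    rw [S_eq_range, S_eq_range, Finset.sum_range_add_sum_Ico _ h]
  have h2 : ∀ i ∈ Finset.Ico (a + 1) b, pq (i + 1) x * pq (i + 2) x ≤
      ∏ j ∈ Finset.Ico (a + 1) (b + 1), pq (j + 1) x := fun i hi => by
    rw [← Finset.prod_pair (f := fun j => pq (j + 1) x) (show i ≠ i + 1 by omega)]
    refine Finset.prod_le_prod_of_subset_of_one_le' ?_ fun j _ _ => one_le_pq hx _
    intro j hj
    simp only [Finset.mem_insert, Finset.mem_singleton, Finset.mem_Ico] at hj hi ⊢
    omega
  have h3 := Finset.sum_le_card_nsmul _ _ _ h2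
  rw [Nat.card_Ico, smul_eq_mul] at h3
  have h4 : b - (a + 1) ≤ 2 ^ (b - a) := by
    have := (Nat.lt_two_pow_self (n := b - a)).le
    omega
  have h5 := h3.trans (Nat.mul_le_mul_right _ h4)
  have h6 : S b x ≤ S (a + 1) x +
      2 ^ (b - a) * ∏ j ∈ Finset.Ico (a + 1) (b + 1), pq (j + 1) x := by omega
  have h7 : (S b x : ℝ) ≤ S (a + 1) x +
      2 ^ (b - a) * ∏ j ∈ Finset.Ico (a + 1) (b + 1), (pq (j + 1) x : ℝ) := by exact_mod_cast h6
  linarith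

/-- Since `φ (n_{k-1} + 1)` is at most a fixed fraction `d < 1` of `φ (n_k)`, the block between
them carries a positive proportion of `S_{n_k}`. -/
lemma eventually_le_S_sub {φ : ℕ → ℝ} (hpos : ∀ n, 0 < φ n) {x : ℝ}
    (hx : Tendsto (fun n : ℕ => (S n x : ℝ) / φ n) atTop (nhds 1)) {nk : ℕ → ℕ}
    (hnk : Tendsto nk atTop atTop) {d : ℝ} (hd1 : d < 1)
    (hd : ∀ᶠ k in atTop, φ (nk (k - 1) + 1) ≤ d * φ (nk k)) :
    ∀ᶠ k in atTop, (1 - d) / 2 * φ (nk k) ≤ (S (nk k) x : ℝ) - S (nk (k - 1) + 1) x := by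
  set ε := (1 - d) / 4 with hε
  have hε0 : 0 < ε := by linarith
  have hb : Tendsto (fun k => nk (k - 1) + 1) atTop atTop :=
    (tendsto_add_atTop_nat 1).comp (hnk.comp (tendsto_sub_atTop_nat 1))
  have h1 := (hx.comp hnk).eventually (lt_mem_nhds (show 1 - ε < 1 by linarith))
  have h2 := (hx.comp hb).eventually (gt_mem_nhds (show 1 < 1 + ε by linarith))
  filter_upwards [h1, h2, hd] with k h1 h2 h3
  simp only [Function.comp_apply] at h1 h2
  rw [lt_div_iff₀ (hpos _)] at h1
  rw [div_lt_iff₀ (hpos _)] at h2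
  have h4 : (1 + ε) * φ (nk (k - 1) + 1) ≤ (1 + ε) * (d * φ (nk k)) := by gcongr
  have h5 : 0 ≤ φ (nk k) * (1 - d) * (1 - d) := by
    have := hpos (nk k)
    have : 0 < 1 - d := by linarith
    positivity
  nlinarith

lemma Ephi_subset_bigMean (φ : ℕ → ℝ)
    (hpos : ∀ n, 0 < φ n) (htop : Tendsto φ atTop atTop)
    (hyp : ∀ M : ℝ, 1 < M → ∃ nk : ℕ → ℕ, StrictMono nk ∧ (∀ k, 0 < nk k) ∧
      0 < liminf (fun k : ℕ => Real.log (φ (nk k)) - Real.log (φ (nk (k - 1) + 1))) atTop ∧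
      ∀ᶠ k : ℕ in atTop,
        2 ≤ nk k - nk (k - 1) ∧
        M ≤ Real.log (φ (nk k)) / ((nk k : ℝ) - nk (k - 1))) :
    Ephi φ ⊆ bigMean := by
  rintro x ⟨hx01, hxirr, hx⟩
  have hxU : x ∈ irrUnit := ⟨hx01, hxirr⟩
  refine ⟨hxU, fun R₀ => ?_⟩
  -- It suffices to treat large `R`, for which the constant `M` below exceeds `1`.
  obtain ⟨R, hR0, hR2⟩ : ∃ R : ℝ, |R₀| ≤ R ∧ 2 ≤ R := ⟨_, le_max_left _ _, le_max_right _ _⟩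
  suffices h : ∃ᶠ m in atTop, R ^ m ≤ ∏ i ∈ Finset.range m, (pq (i + 1) x : ℝ) by
    refine h.mono fun m hm => le_trans ?_ hm
    calc R₀ ^ m ≤ |R₀ ^ m| := le_abs_self _
      _ = |R₀| ^ m := abs_pow _ _
      _ ≤ R ^ m := by gcongr
  have hRpos : 0 < R := by linarith
  have hM : 1 < 2 * Real.log (2 * R ^ 2) := by
    have : Real.exp 1 < 2 * R ^ 2 := by nlinarith [Real.exp_one_lt_d9]
    have := (Real.lt_log_iff_exp_lt (by positivity)).2 this
    linarith
  obtain ⟨nk, hmono, -, hlim, hev⟩ := hyp _ hM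
  have hnk := hmono.tendsto_atTop
  obtain ⟨δ, hδ0, hδ⟩ : ∃ δ : ℝ, 0 < δ ∧ ∀ᶠ k in atTop,
      δ ≤ Real.log (φ (nk k)) - Real.log (φ (nk (k - 1) + 1)) := by
    by_contra hcon
    refine hlim.not_ge ?_
    rw [liminf_eq]
    refine Real.sSup_nonpos fun a ha => ?_
    by_contra! ha0
    exact hcon ⟨a, ha0, ha⟩
  have hd : ∀ᶠ k in atTop, φ (nk (k - 1) + 1) ≤ Real.exp (-δ) * φ (nk k) := by
    filter_upwards [hδ] with k hk
    rw [← Real.log_le_log_iff (hpos _) (mul_pos (Real.exp_pos _) (hpos _)),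
      Real.log_mul (Real.exp_pos _).ne' (hpos _).ne', Real.log_exp]
    linarith
  have hd1 : Real.exp (-δ) < 1 := by rw [Real.exp_lt_one_iff]; linarith
  have hS := eventually_le_S_sub hpos hx hnk hd1 hd
  set c := (1 - Real.exp (-δ)) / 2 with hc
  have hc0 : 0 < c := by linarith
  have hbig : ∀ᶠ k in atTop, (c⁻¹) ^ 2 ≤ φ (nk k) :=
    (htop.comp hnk).eventually (eventually_ge_atTop _)
  have hblock : ∀ᶠ k in atTop, (R ^ 2) ^ (nk k - nk (k - 1)) ≤
      ∏ i ∈ Finset.Ico (nk (k - 1) + 1) (nk k + 1), (pq (i + 1) x : ℝ) := by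
    filter_upwards [hS, hbig, hev] with k h1 h2 ⟨h3, h4⟩
    have h5 := h1.trans (S_sub_le hxU (show nk (k - 1) + 1 ≤ nk k by omega))
    set l := nk k - nk (k - 1) with hl
    have hlc : (nk k : ℝ) - nk (k - 1) = l := by
      rw [hl, Nat.cast_sub (by omega)]
    have hl0 : (0:ℝ) < l := by
      have : 0 < l := by omega
      exact_mod_cast this
    rw [hlc, le_div_iff₀ hl0] at h4
    -- One factor `√φ` absorbs the constant `c`, the other gives exponential growth.
    have hsq : √(φ (nk k)) * √(φ (nk k)) = φ (nk k) := Real.mul_self_sqrt (hpos _).le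
    have h6 : 1 ≤ c * √(φ (nk k)) := by
      have := Real.le_sqrt_of_sq_le h2
      calc 1 = c * c⁻¹ := (mul_inv_cancel₀ hc0.ne').symm
        _ ≤ _ := by gcongr
    have h7 : (2 * R ^ 2) ^ l ≤ √(φ (nk k)) := by
      refine Real.le_sqrt_of_sq_le ?_
      rw [← Real.log_le_log_iff (by positivity) (hpos _), Real.log_pow, Real.log_pow]
      push_cast; linarith
    have h8 : (2 * R ^ 2) ^ l ≤ c * φ (nk k) := by
      calc (2 * R ^ 2) ^ l ≤ 1 * √(φ (nk k)) := by rwa [one_mul]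
        _ ≤ c * √(φ (nk k)) * √(φ (nk k)) := by gcongr
        _ = c * φ (nk k) := by rw [mul_assoc, hsq]
    rw [mul_pow] at h8
    exact le_of_mul_le_mul_left (h8.trans h5) (by positivity)
  obtain ⟨K, hK⟩ := eventually_atTop.1 hblock
  have hind : ∀ j, (R ^ 2) ^ (nk (K + j) - nk K) ≤
      ∏ i ∈ Finset.range (nk (K + j) + 1), (pq (i + 1) x : ℝ) := by
    intro j
    induction j with
    | zero =>
      have : 1 ≤ ∏ i ∈ Finset.range (nk K + 1), pq (i + 1) x :=
        Finset.one_le_prod' fun i _ => one_le_pq hxU _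
      simpa using (by exact_mod_cast this :
        (1:ℝ) ≤ ∏ i ∈ Finset.range (nk K + 1), (pq (i + 1) x : ℝ))
    | succ j ih =>
      have h1 := hK (K + (j + 1)) (by omega)
      rw [show K + (j + 1) - 1 = K + j by omega] at h1
      have h2 : nk (K + j) < nk (K + (j + 1)) := hmono (by omega)
      have h3 : nk K ≤ nk (K + j) := hmono.monotone (by omega)
      rw [← Finset.prod_range_mul_prod_Ico _ (show nk (K + j) + 1 ≤ nk (K + (j + 1)) + 1 by omega),
        show nk (K + (j + 1)) - nk K = (nk (K + j) - nk K) + (nk (K + (j + 1)) - nk (K + j)) by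
          omega, pow_add]
      gcongr
  refine frequently_atTop.2 fun N => ?_
  -- For `n_k ≥ 2 n_K + 1` the exponent `2 (n_k - n_K)` exceeds the number `n_k + 1` of factors.
  have hj : 2 * nk K + 1 + N ≤ nk (K + (2 * nk K + 1 + N)) :=
    (show 2 * nk K + 1 + N ≤ K + (2 * nk K + 1 + N) by omega).trans (hmono.id_le _)
  refine ⟨nk (K + (2 * nk K + 1 + N)) + 1, by omega, le_trans ?_ (hind _)⟩
  rw [← pow_mul]
  exact pow_le_pow_right₀ (by linarith) (by omega)

theorem dimH_Ephi_upper_half (φ : ℕ → ℝ)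
    (hpos : ∀ n, 0 < φ n) (hmono : Monotone φ)
    (htop : Tendsto φ atTop atTop)
    (hyp : ∀ M : ℝ, 1 < M → ∃ nk : ℕ → ℕ, StrictMono nk ∧ (∀ k, 0 < nk k) ∧
      0 < liminf (fun k : ℕ => Real.log (φ (nk k)) - Real.log (φ (nk (k - 1) + 1))) atTop ∧
      ∀ᶠ k : ℕ in atTop,
        2 ≤ nk k - nk (k - 1) ∧
        M ≤ Real.log (φ (nk k)) / ((nk k : ℝ) - nk (k - 1))) :
    dimH (Ephi φ) ≤ 1 / 2 := by
  exact (dimH_mono (Ephi_subset_bigMean φ hpos htop hyp)).trans dimH_bigMean_le
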